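/- Let ω and ν be radial weights. Then P_ω : L^∞_ν̂ → B^∞_ν̂ is bounded if and only if sup_{z∈𝔻} (1−|z|) ν̂(z) ∫_𝔻 |(B^ω_ζ)'(z)| (ω(ζ)/ν̂(ζ)) dA(ζ) < ∞, where (B^ω_ζ)'(z) = Σ_{n=1}^∞ n z^{n−1} conj(ζ)^n / (2 ω_{2n+1}) denotes the derivative of the kernel with respect to z. -/

import Mathlib

open MeasureTheory Set Complex
open scoped ENNReal

noncomputable section

/-- The open unit disc in the complex plane. -/
def unitDisc : Set ℂ := Metric.ball 0 1

/-- Tail integral `ω̂(r) = ∫_r^1 ω(s) ds`. -/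
def tl (ω : ℝ → ℝ) (r : ℝ) : ℝ := ∫ s in r..1, ω s

/-- Moment `ω_x = ∫_0^1 s^x ω(s) ds` (real power in the exponent). -/
def mom (ω : ℝ → ℝ) (x : ℝ) : ℝ := ∫ s in (0:ℝ)..1, s ^ x * ω s

/-- `ω` is a radial weight: nonnegative and integrable on `[0,1)`, with positive
tail integrals. -/
def IsRadialWeight (ω : ℝ → ℝ) : Prop :=
  (∀ s ∈ Ico (0:ℝ) 1, 0 ≤ ω s) ∧ IntegrableOn ω (Ico (0:ℝ) 1) ∧
    ∀ r ∈ Ico (0:ℝ) 1, 0 < tl ω r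

/-- The upper doubling class `D̂`: `sup_{0≤r<1} ω̂(r)/ω̂((1+r)/2) < ∞`. -/
def Dhat (ω : ℝ → ℝ) : Prop :=
  ∃ C : ℝ, ∀ r ∈ Ico (0:ℝ) 1, tl ω r ≤ C * tl ω ((1 + r) / 2)

/-- The class `Ď`: there are `K > 1`, `C > 1` with `ω̂(r) ≥ C ω̂(1 - (1-r)/K)`. -/
def Dcheck (ω : ℝ → ℝ) : Prop :=
  ∃ K C : ℝ, 1 < K ∧ 1 < C ∧ ∀ r ∈ Ico (0:ℝ) 1, C * tl ω (1 - (1 - r) / K) ≤ tl ω r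

/-- The class `D = D̂ ∩ Ď`. -/
def DD (ω : ℝ → ℝ) : Prop := Dhat ω ∧ Dcheck ω

/-- The Bergman reproducing kernel `B^ω_z(ζ) = Σ_n (conj z · ζ)^n / (2 ω_{2n+1})`. -/
def bKer (ω : ℝ → ℝ) (z ζ : ℂ) : ℂ :=
  ∑' n : ℕ, (starRingEnd ℂ z * ζ) ^ n / ((2 * mom ω (2 * (n : ℝ) + 1) : ℝ) : ℂ)

/-- The integrand of the Bergman projection. -/
def bInt (ω : ℝ → ℝ) (f : ℂ → ℂ) (z ζ : ℂ) : ℂ :=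
  f ζ * starRingEnd ℂ (bKer ω z ζ) * ((ω ‖ζ‖ : ℝ) : ℂ)

/-- The Bergman projection `P_ω f(z) = ∫_𝔻 f(ζ) conj(B^ω_z(ζ)) ω(ζ) dA(ζ)`,
where `dA` is normalized area measure `dx dy / π`. -/
def bProj (ω : ℝ → ℝ) (f : ℂ → ℂ) (z : ℂ) : ℂ :=
  (Real.pi : ℂ)⁻¹ * ∫ ζ in unitDisc, bInt ω f z ζ

/-- The weighted sup-norm `ess sup_{z ∈ 𝔻} |f(z)| v(|z|)`, valued in `ℝ≥0∞`. -/
def wSup (v : ℝ → ℝ) (f : ℂ → ℂ) : ℝ≥0∞ :=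
  essSup (fun z => ENNReal.ofReal (‖f z‖ * v ‖z‖)) (volume.restrict unitDisc)

/-- `P_ω : L^∞_v → H^∞_v` is bounded: there is `C > 0` so that for every
`f ∈ L^∞_v` the defining integral converges absolutely at every point of `𝔻`,
`P_ω f` is analytic on `𝔻`, and `‖P_ω f‖_{L^∞_v} ≤ C ‖f‖_{L^∞_v}`. -/
def ProjBddH (ω v : ℝ → ℝ) : Prop :=
  ∃ C : ℝ, 0 < C ∧ ∀ f : ℂ → ℂ,
    AEStronglyMeasurable f (volume.restrict unitDisc) → wSup v f < ⊤ →
    (∀ z ∈ unitDisc, IntegrableOn (bInt ω f z) unitDisc) ∧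
    DifferentiableOn ℂ (bProj ω f) unitDisc ∧
    wSup v (bProj ω f) ≤ ENNReal.ofReal C * wSup v f

/-- `P_ω : L^∞_v → B^∞_v` is bounded: there is `C > 0` so that for every
`f ∈ L^∞_v` the defining integral converges absolutely at every point of `𝔻`,
`P_ω f` is analytic on `𝔻`, and `‖P_ω f‖_{B^∞_v} ≤ C ‖f‖_{L^∞_v}`. -/
def ProjBddB (ω v : ℝ → ℝ) : Prop :=
  ∃ C : ℝ, 0 < C ∧ ∀ f : ℂ → ℂ,
    AEStronglyMeasurable f (volume.restrict unitDisc) → wSup v f < ⊤ →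
    (∀ z ∈ unitDisc, IntegrableOn (bInt ω f z) unitDisc) ∧
    DifferentiableOn ℂ (bProj ω f) unitDisc ∧
    ∀ z ∈ unitDisc,
      ENNReal.ofReal ((1 - ‖z‖) * v ‖z‖ * ‖deriv (bProj ω f) z‖) ≤
        ENNReal.ofReal C * wSup v f

/-- The moment condition `sup_{x ≥ 0} (ν_x / ω_{2x}) (ω/ν̂)_x < ∞`. -/
def MomCond (ω ν : ℝ → ℝ) : Prop :=
  ∃ C : ℝ, ∀ x : ℝ, 0 ≤ x →
    mom ν x / mom ω (2 * x) * mom (fun s => ω s / tl ν s) x ≤ C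

/-- The tail condition `sup_{0 ≤ r < 1} (ν̂(r)/ω̂(r)) ∫_r^1 ω(s)/ν̂(s) ds < ∞`. -/
def TailCond (ω ν : ℝ → ℝ) : Prop :=
  ∃ C : ℝ, ∀ r ∈ Ico (0:ℝ) 1, tl ν r / tl ω r * tl (fun s => ω s / tl ν s) r ≤ C

/-- Derivative in `z` of the Bergman kernel `ζ ↦ B^ω_ζ(z)`:
`(B^ω_ζ)'(z) = Σ_{n≥1} n z^{n-1} conj(ζ)^n / (2 ω_{2n+1})`. -/
def bKerD (ω : ℝ → ℝ) (ζ z : ℂ) : ℂ :=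
  ∑' n : ℕ,
    (n : ℂ) * z ^ (n - 1) * (starRingEnd ℂ ζ) ^ n /
      ((2 * mom ω (2 * (n : ℝ) + 1) : ℝ) : ℂ)

lemma isOpen_unitDisc : IsOpen unitDisc := Metric.isOpen_ball

lemma meas_unitDisc : MeasurableSet unitDisc := isOpen_unitDisc.measurableSet

lemma mem_unitDisc {z : ℂ} : z ∈ unitDisc ↔ ‖z‖ < 1 := by simp [unitDisc]

lemma IsRadialWeight.integrableOn_Icc {ω : ℝ → ℝ} (h : IsRadialWeight ω) :
    IntegrableOn ω (Icc (0:ℝ) 1) :=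
  (integrableOn_Icc_iff_integrableOn_Ico).2 h.2.1

lemma IsRadialWeight.continuousOn_tl {ω : ℝ → ℝ} (h : IsRadialWeight ω) :
    ContinuousOn (tl ω) (Icc (0:ℝ) 1) := by
  have := intervalIntegral.continuousOn_primitive_interval_left (a := 0) (b := 1) (f := ω)
    (μ := volume) (by simpa [uIcc_of_le] using h.integrableOn_Icc)
  rw [uIcc_of_le zero_le_one] at this
  exact this

lemma IsRadialWeight.continuousOn_tl_norm {ω : ℝ → ℝ} (h : IsRadialWeight ω) :
    ContinuousOn (fun ζ : ℂ => tl ω ‖ζ‖) unitDisc :=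
  h.continuousOn_tl.comp continuous_norm.continuousOn
    (fun _ hz => ⟨norm_nonneg _, (mem_unitDisc.1 hz).le⟩)

lemma IsRadialWeight.tl_pos {ω : ℝ → ℝ} (h : IsRadialWeight ω) {z : ℂ} (hz : z ∈ unitDisc) :
    0 < tl ω ‖z‖ := h.2.2 _ ⟨norm_nonneg _, mem_unitDisc.1 hz⟩

lemma IsRadialWeight.nonneg {ω : ℝ → ℝ} (h : IsRadialWeight ω) {z : ℂ} (hz : z ∈ unitDisc) :
    0 ≤ ω ‖z‖ := h.1 _ ⟨norm_nonneg _, mem_unitDisc.1 hz⟩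

lemma IsRadialWeight.integrableOn_norm {ω : ℝ → ℝ} (h : IsRadialWeight ω) :
    IntegrableOn (fun ζ : ℂ => ω ‖ζ‖) unitDisc := by
  unfold unitDisc
  rw [MeasureTheory.integrableOn_fun_norm_addHaar]
  simp only [Complex.finrank_real_complex, smul_eq_mul]
  have h1 : IntegrableOn ω (Icc (0:ℝ) 1) := h.integrableOn_Icc
  have := h1.continuousOn_mul (g := fun y : ℝ => y ^ (2 - 1)) (by fun_prop) isCompact_Icc
  exact this.mono_set Ioo_subset_Icc_self

lemma IsRadialWeight.mom_ge {ω : ℝ → ℝ} (h : IsRadialWeight ω) {s : ℝ} (hs0 : 0 < s)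
    (hs : s < 1) (n : ℕ) : s ^ (2 * n + 1) * tl ω s ≤ mom ω (2 * (n : ℝ) + 1) := by
  have hi : IntegrableOn ω (Icc (0:ℝ) 1) := h.integrableOn_Icc
  have hpow : ∀ t : ℝ, t ^ (2 * (n : ℝ) + 1) = t ^ (2 * n + 1) := by
    intro t
    rw [← Real.rpow_natCast]; push_cast; rfl
  have hi2 : IntegrableOn (fun t => t ^ (2 * n + 1) * ω t) (Icc (0:ℝ) 1) :=
    hi.continuousOn_mul (by fun_prop) isCompact_Icc
  unfold mom tl
  simp_rw [hpow]
  rw [intervalIntegral.integral_of_le hs.le, intervalIntegral.integral_of_le zero_le_one,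
    integral_Ioc_eq_integral_Ioo, integral_Ioc_eq_integral_Ioo, ← integral_const_mul]
  have hsub : Ioo s 1 ⊆ Ioo (0:ℝ) 1 := Ioo_subset_Ioo_left hs0.le
  calc ∫ t in Ioo s 1, s ^ (2 * n + 1) * ω t
      ≤ ∫ t in Ioo s 1, t ^ (2 * n + 1) * ω t := by
        refine setIntegral_mono_on ?_ ?_ measurableSet_Ioo ?_
        · exact (hi.mono_set (hsub.trans Ioo_subset_Icc_self)).const_mul _
        · exact hi2.mono_set (hsub.trans Ioo_subset_Icc_self)
        · intro t ht
          have := h.1 t ⟨(hsub ht).1.le, ht.2⟩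
          have := ht.1.le
          gcongr
    _ ≤ _ := by
        refine setIntegral_mono_set (hi2.mono_set Ioo_subset_Icc_self) ?_ hsub.eventuallyLE
        refine (ae_restrict_iff' measurableSet_Ioo).2 (Filter.Eventually.of_forall ?_)
        intro t ht
        exact mul_nonneg (pow_nonneg ht.1.le _) (h.1 t ⟨ht.1.le, ht.2⟩)

lemma IsRadialWeight.mom_pos {ω : ℝ → ℝ} (h : IsRadialWeight ω) (n : ℕ) :
    0 < mom ω (2 * (n : ℝ) + 1) := by
  refine lt_of_lt_of_le ?_ (h.mom_ge (s := 1/2) (by norm_num) (by norm_num) n)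
  exact mul_pos (by positivity) (h.2.2 _ (by norm_num))

/-- The coefficients of the kernel. -/
def kc (ω : ℝ → ℝ) (n : ℕ) : ℂ := ((2 * mom ω (2 * (n : ℝ) + 1) : ℝ) : ℂ)

/-- The one-variable kernel function. -/
def kf (ω : ℝ → ℝ) (w : ℂ) : ℂ := ∑' n : ℕ, w ^ n / kc ω n

lemma IsRadialWeight.summable {ω : ℝ → ℝ} (h : IsRadialWeight ω) {r : ℝ} (hr0 : 0 ≤ r)
    (hr : r < 1) : Summable (fun n : ℕ => r ^ n / (2 * mom ω (2 * (n : ℝ) + 1))) := by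
  obtain ⟨s, hs1, hs2⟩ : ∃ s, Real.sqrt r < s ∧ s < 1 :=
    exists_between ((Real.sqrt_lt' one_pos).2 (by simpa using hr))
  have hs0 : 0 < s := (Real.sqrt_nonneg r).trans_lt hs1
  have hrs : r < s ^ 2 := (Real.sqrt_lt' hs0).1 hs1
  have ht : 0 < tl ω s := h.2.2 s ⟨hs0.le, hs2⟩
  have hg : Summable (fun n : ℕ => (r / s ^ 2) ^ n) :=
    summable_geometric_of_lt_one (by positivity) ((div_lt_one (by positivity)).2 hrs)
  refine Summable.of_nonneg_of_le (fun n => ?_) (fun n => ?_) (hg.mul_left (2 * (s * tl ω s))⁻¹)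
  · have := h.mom_pos n
    positivity
  · have h1 := h.mom_ge hs0 hs2 n
    calc r ^ n / (2 * mom ω (2 * (n : ℝ) + 1)) ≤ r ^ n / (2 * (s ^ (2 * n + 1) * tl ω s)) := by
          gcongr
      _ = _ := by
          rw [div_pow, ← pow_mul, pow_succ]
          field_simp

lemma IsRadialWeight.kf_term {ω : ℝ → ℝ} (h : IsRadialWeight ω) {r : ℝ} (n : ℕ) (w : ℂ)
    (hw : w ∈ Metric.ball (0:ℂ) r) :
    ‖w ^ n / kc ω n‖ ≤ r ^ n / (2 * mom ω (2 * (n : ℝ) + 1)) := by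
  have := h.mom_pos n
  have hw' : ‖w‖ ≤ r := by simpa using (mem_ball_zero_iff.1 hw).le
  rw [kc, norm_div, norm_pow, Complex.norm_real, Real.norm_of_nonneg (by positivity)]
  gcongr

lemma IsRadialWeight.kf_diff {ω : ℝ → ℝ} (h : IsRadialWeight ω) :
    DifferentiableOn ℂ (kf ω) unitDisc := by
  intro w hw
  obtain ⟨r, h1, h2⟩ := exists_between (mem_unitDisc.1 hw)
  have h0 : 0 ≤ r := (norm_nonneg w).trans h1.le
  have := differentiableOn_tsum_of_summable_norm (F := fun n w => w ^ n / kc ω n)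
    (h.summable h0 h2) (fun n => by fun_prop) Metric.isOpen_ball (fun n w hw => h.kf_term n w hw)
  exact (this.differentiableAt (Metric.isOpen_ball.mem_nhds
    (mem_ball_zero_iff.2 h1))).differentiableWithinAt

lemma IsRadialWeight.kf_deriv {ω : ℝ → ℝ} (h : IsRadialWeight ω) {w : ℂ} (hw : w ∈ unitDisc) :
    deriv (kf ω) w = ∑' n : ℕ, (n : ℂ) * w ^ (n - 1) / kc ω n := by
  obtain ⟨r, h1, h2⟩ := exists_between (mem_unitDisc.1 hw)
  have h0 : 0 ≤ r := (norm_nonneg w).trans h1.le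
  have := hasSum_deriv_of_summable_norm (F := fun n w => w ^ n / kc ω n)
    (h.summable h0 h2) (fun n => by fun_prop) Metric.isOpen_ball (fun n w hw => h.kf_term n w hw)
    (mem_ball_zero_iff.2 h1)
  refine Eq.trans ?_ (this.tsum_eq.symm.trans ?_)
  · rfl
  · congr 1
    ext n
    simp

lemma conj_bKer (ω : ℝ → ℝ) (z ζ : ℂ) :
    starRingEnd ℂ (bKer ω z ζ) = kf ω (z * starRingEnd ℂ ζ) := by
  unfold bKer kf kc
  rw [Complex.conj_tsum]
  congr 1
  ext n
  rw [map_div₀, Complex.conj_ofReal, map_pow, map_mul, Complex.conj_conj]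

lemma mul_conj_mem {z ζ : ℂ} (hz : z ∈ unitDisc) (hζ : ζ ∈ unitDisc) :
    z * starRingEnd ℂ ζ ∈ unitDisc := by
  rw [mem_unitDisc] at *
  rw [norm_mul, Complex.norm_conj]
  nlinarith [norm_nonneg z, norm_nonneg ζ]

lemma IsRadialWeight.bKerD_eq {ω : ℝ → ℝ} (h : IsRadialWeight ω) {z ζ : ℂ} (hz : z ∈ unitDisc)
    (hζ : ζ ∈ unitDisc) :
    bKerD ω ζ z = deriv (kf ω) (z * starRingEnd ℂ ζ) * starRingEnd ℂ ζ := by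
  rw [h.kf_deriv (mul_conj_mem hz hζ), ← tsum_mul_right]
  unfold bKerD kc
  congr 1
  ext n
  rcases n with _ | n
  · simp
  · simp only [Nat.add_sub_cancel, mul_pow, pow_succ]
    ring

lemma IsRadialWeight.hasDerivAt_conj_bKer {ω : ℝ → ℝ} (h : IsRadialWeight ω) {z ζ : ℂ}
    (hz : z ∈ unitDisc) (hζ : ζ ∈ unitDisc) :
    HasDerivAt (fun z => starRingEnd ℂ (bKer ω z ζ)) (bKerD ω ζ z) z := by
  simp_rw [conj_bKer]
  rw [h.bKerD_eq hz hζ]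
  have h1 := (h.kf_diff.differentiableAt (isOpen_unitDisc.mem_nhds
    (mul_conj_mem hz hζ))).hasDerivAt
  have h2 : HasDerivAt (fun z : ℂ => z * starRingEnd ℂ ζ) (starRingEnd ℂ ζ) z := by
    simpa using (hasDerivAt_id z).mul_const (starRingEnd ℂ ζ)
  exact HasDerivAt.comp z h1 h2

lemma IsRadialWeight.cont_conj_bKer {ω : ℝ → ℝ} (h : IsRadialWeight ω) {z : ℂ}
    (hz : z ∈ unitDisc) : ContinuousOn (fun ζ => starRingEnd ℂ (bKer ω z ζ)) unitDisc := by
  simp_rw [conj_bKer]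
  exact h.kf_diff.continuousOn.comp (t := unitDisc)
    (by fun_prop) (fun ζ hζ => mul_conj_mem hz hζ)

lemma IsRadialWeight.cont_bKerD {ω : ℝ → ℝ} (h : IsRadialWeight ω) {z : ℂ}
    (hz : z ∈ unitDisc) : ContinuousOn (fun ζ => bKerD ω ζ z) unitDisc := by
  refine ContinuousOn.congr (f := fun ζ => deriv (kf ω) (z * starRingEnd ℂ ζ) * starRingEnd ℂ ζ)
    ?_ (fun ζ hζ => h.bKerD_eq hz hζ)
  refine ContinuousOn.mul ?_ (by fun_prop)
  exact (h.kf_diff.deriv isOpen_unitDisc).continuousOn.comp (t := unitDisc)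
    (by fun_prop) (fun ζ hζ => mul_conj_mem hz hζ)

lemma IsRadialWeight.bounds {ω : ℝ → ℝ} (h : IsRadialWeight ω) {r : ℝ} (hr : r < 1) :
    ∃ M : ℝ, ∀ z ζ : ℂ, ‖z‖ ≤ r → ζ ∈ unitDisc →
      ‖starRingEnd ℂ (bKer ω z ζ)‖ ≤ M ∧ ‖bKerD ω ζ z‖ ≤ M := by
  have hsub : Metric.closedBall (0:ℂ) r ⊆ unitDisc := Metric.closedBall_subset_ball hr
  obtain ⟨M₁, h1⟩ := (isCompact_closedBall (0:ℂ) r).exists_bound_of_continuousOn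
    (h.kf_diff.continuousOn.mono hsub)
  obtain ⟨M₂, h2⟩ := (isCompact_closedBall (0:ℂ) r).exists_bound_of_continuousOn
    ((h.kf_diff.deriv isOpen_unitDisc).continuousOn.mono hsub)
  refine ⟨max M₁ M₂, fun z ζ hz hζ => ?_⟩
  have hz' : z ∈ unitDisc := mem_unitDisc.2 (hz.trans_lt hr)
  have hζ1 := (mem_unitDisc.1 hζ).le
  have hm : z * starRingEnd ℂ ζ ∈ Metric.closedBall (0:ℂ) r := by
    rw [mem_closedBall_zero_iff, norm_mul, Complex.norm_conj]
    nlinarith [norm_nonneg z, norm_nonneg ζ]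
  constructor
  · rw [conj_bKer]
    exact (h1 _ hm).trans (le_max_left _ _)
  · rw [h.bKerD_eq hz' hζ, norm_mul, Complex.norm_conj]
    have := h2 _ hm
    refine le_trans ?_ (le_max_right _ _)
    nlinarith [norm_nonneg (deriv (kf ω) (z * starRingEnd ℂ ζ)), norm_nonneg ζ]

lemma IsRadialWeight.key {ω : ℝ → ℝ} (h : IsRadialWeight ω) {f : ℂ → ℂ}
    (hf : IntegrableOn (fun ζ => f ζ * ((ω ‖ζ‖ : ℝ) : ℂ)) unitDisc) {z : ℂ}
    (hz : z ∈ unitDisc) :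
    IntegrableOn (bInt ω f z) unitDisc ∧
    HasDerivAt (bProj ω f) ((Real.pi : ℂ)⁻¹ *
      ∫ ζ in unitDisc, bKerD ω ζ z * (f ζ * ((ω ‖ζ‖ : ℝ) : ℂ))) z := by
  have hbI : ∀ z, bInt ω f z = fun ζ => starRingEnd ℂ (bKer ω z ζ) * (f ζ * ((ω ‖ζ‖ : ℝ) : ℂ)) := by
    intro z; ext ζ; unfold bInt; ring
  obtain ⟨r, hr1, hr2⟩ := exists_between (mem_unitDisc.1 hz)
  obtain ⟨M, hM⟩ := h.bounds hr2
  have hmeas : ∀ z ∈ unitDisc,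
      AEStronglyMeasurable (bInt ω f z) (volume.restrict unitDisc) := by
    intro z hz
    rw [hbI]
    exact ((h.cont_conj_bKer hz).aestronglyMeasurable meas_unitDisc).mul hf.aestronglyMeasurable
  have hint : IntegrableOn (bInt ω f z) unitDisc := by
    refine Integrable.mono' (hf.norm.const_mul M) (hmeas z hz) ?_
    refine (ae_restrict_iff' meas_unitDisc).2 (Filter.Eventually.of_forall fun ζ hζ => ?_)
    rw [hbI, norm_mul]
    exact mul_le_mul_of_nonneg_right (hM z ζ hr1.le hζ).1 (norm_nonneg _)
  refine ⟨hint, ?_⟩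
  have key := hasDerivAt_integral_of_dominated_loc_of_deriv_le (𝕜 := ℂ)
    (μ := volume.restrict unitDisc) (F := bInt ω f)
    (F' := fun z ζ => bKerD ω ζ z * (f ζ * ((ω ‖ζ‖ : ℝ) : ℂ))) (x₀ := z)
    (s := Metric.ball 0 r) (bound := fun ζ => M * ‖f ζ * ((ω ‖ζ‖ : ℝ) : ℂ)‖)
    (Metric.isOpen_ball.mem_nhds (mem_ball_zero_iff.2 hr1))
    (Filter.eventually_of_mem (isOpen_unitDisc.mem_nhds hz) hmeas) hint
    (((h.cont_bKerD hz).aestronglyMeasurable meas_unitDisc).mul hf.aestronglyMeasurable)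
    ((ae_restrict_iff' meas_unitDisc).2 (Filter.Eventually.of_forall fun ζ hζ x hx => by
      rw [norm_mul]
      exact mul_le_mul_of_nonneg_right (hM x ζ (mem_ball_zero_iff.1 hx).le hζ).2 (norm_nonneg _)))
    (hf.norm.const_mul M)
    ((ae_restrict_iff' meas_unitDisc).2 (Filter.Eventually.of_forall fun ζ hζ x hx => by
      simp_rw [hbI]
      exact (h.hasDerivAt_conj_bKer (mem_unitDisc.2 ((mem_ball_zero_iff.1 hx).trans hr2))
        hζ).mul_const _))
  exact key.2.const_mul _

lemma quot_meas {ω ν : ℝ → ℝ} (hω : IsRadialWeight ω) (hν : IsRadialWeight ν) :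
    AEStronglyMeasurable (fun ζ : ℂ => ω ‖ζ‖ / tl ν ‖ζ‖) (volume.restrict unitDisc) := by
  simp_rw [div_eq_mul_inv]
  exact hω.integrableOn_norm.aestronglyMeasurable.mul
    ((hν.continuousOn_tl_norm.inv₀ (fun ζ hζ => (hν.tl_pos hζ).ne')).aestronglyMeasurable
      meas_unitDisc)

lemma ae_bound {ν : ℝ → ℝ} {f : ℂ → ℂ} (hfin : wSup (tl ν) f < ⊤) :
    ∀ᵐ ζ ∂(volume.restrict unitDisc), ‖f ζ‖ * tl ν ‖ζ‖ ≤ (wSup (tl ν) f).toReal := by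
  have := ENNReal.ae_le_essSup (μ := volume.restrict unitDisc)
    (fun z => ENNReal.ofReal (‖f z‖ * tl ν ‖z‖))
  filter_upwards [this] with ζ h
  exact (ENNReal.ofReal_le_iff_le_toReal hfin.ne).1 h

lemma integrable_f {ω ν : ℝ → ℝ} (hω : IsRadialWeight ω) (hν : IsRadialWeight ν)
    (hg : IntegrableOn (fun ζ : ℂ => ω ‖ζ‖ / tl ν ‖ζ‖) unitDisc) {f : ℂ → ℂ}
    (hf : AEStronglyMeasurable f (volume.restrict unitDisc)) (hfin : wSup (tl ν) f < ⊤) :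
    IntegrableOn (fun ζ => f ζ * ((ω ‖ζ‖ : ℝ) : ℂ)) unitDisc := by
  refine Integrable.mono' (hg.const_mul (wSup (tl ν) f).toReal)
    (hf.mul (Complex.continuous_ofReal.comp_aestronglyMeasurable
      hω.integrableOn_norm.aestronglyMeasurable)) ?_
  filter_upwards [ae_bound hfin, ae_restrict_mem meas_unitDisc] with ζ h hζ
  have h1 := hν.tl_pos hζ
  have h2 := hω.nonneg hζ
  rw [norm_mul, Complex.norm_real, Real.norm_of_nonneg h2, mul_div_assoc',
    le_div_iff₀ h1]
  nlinarith

lemma integrable_D {ω ν : ℝ → ℝ} (hω : IsRadialWeight ω)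
    (hg : IntegrableOn (fun ζ : ℂ => ω ‖ζ‖ / tl ν ‖ζ‖) unitDisc) {z : ℂ} (hz : z ∈ unitDisc) :
    IntegrableOn (fun ζ => ‖bKerD ω ζ z‖ * (ω ‖ζ‖ / tl ν ‖ζ‖)) unitDisc := by
  obtain ⟨M, hM⟩ := hω.bounds (mem_unitDisc.1 hz)
  refine Integrable.mono' (hg.norm.const_mul M)
    (((hω.cont_bKerD hz).norm.aestronglyMeasurable meas_unitDisc).mul hg.aestronglyMeasurable) ?_
  filter_upwards [ae_restrict_mem meas_unitDisc] with ζ hζ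
  rw [norm_mul, norm_norm]
  exact mul_le_mul_of_nonneg_right (hM z ζ le_rfl hζ).2 (norm_nonneg _)

lemma lint_D {ω ν : ℝ → ℝ} (hω : IsRadialWeight ω) (hν : IsRadialWeight ν)
    (hg : IntegrableOn (fun ζ : ℂ => ω ‖ζ‖ / tl ν ‖ζ‖) unitDisc) {z : ℂ} (hz : z ∈ unitDisc) :
    ∫⁻ ζ in unitDisc, ENNReal.ofReal (‖bKerD ω ζ z‖ * (ω ‖ζ‖ / tl ν ‖ζ‖)) =
      ENNReal.ofReal (∫ ζ in unitDisc, ‖bKerD ω ζ z‖ * (ω ‖ζ‖ / tl ν ‖ζ‖)) := by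
  refine (ofReal_integral_eq_lintegral_ofReal (integrable_D hω hg hz) ?_).symm
  filter_upwards [ae_restrict_mem meas_unitDisc] with ζ hζ
  exact mul_nonneg (norm_nonneg _) (div_nonneg (hω.nonneg hζ) (hν.tl_pos hζ).le)

lemma bwd_integrable {ω ν : ℝ → ℝ} (hω : IsRadialWeight ω) (hν : IsRadialWeight ν) {C : ℝ}
    (hC : ENNReal.ofReal ((1 - ‖(0:ℂ)‖) * tl ν ‖(0:ℂ)‖) *
          ∫⁻ ζ in unitDisc,
            ENNReal.ofReal (‖bKerD ω ζ 0‖ * (ω ‖ζ‖ / tl ν ‖ζ‖)) ≤ ENNReal.ofReal C) :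
    IntegrableOn (fun ζ : ℂ => ω ‖ζ‖ / tl ν ‖ζ‖) unitDisc := by
  have h0 : (0:ℂ) ∈ unitDisc := by simp [unitDisc]
  have hpos : 0 < (1 - ‖(0:ℂ)‖) * tl ν ‖(0:ℂ)‖ := by
    have := hν.tl_pos h0
    simpa using this
  have hm := hω.mom_pos 1
  have hfin : ∫⁻ ζ in unitDisc, ENNReal.ofReal (‖bKerD ω ζ 0‖ * (ω ‖ζ‖ / tl ν ‖ζ‖)) < ⊤ := by
    by_contra hcon
    rw [not_lt, top_le_iff] at hcon
    rw [hcon, ENNReal.mul_top (by simpa using hpos)] at hC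
    exact absurd hC (by simp)
  have hD : ∀ ζ : ℂ, ‖bKerD ω ζ 0‖ = ‖ζ‖ / (2 * mom ω (2 * ((1:ℕ):ℝ) + 1)) := by
    intro ζ
    unfold bKerD
    rw [tsum_eq_single 1]
    · simp only [Nat.cast_one, Nat.sub_self, pow_zero, pow_one, one_mul, norm_div,
        Complex.norm_conj, Complex.norm_real]
      simp only [Nat.cast_one] at hm
      rw [Real.norm_of_nonneg (by positivity)]
    · intro n hn
      rcases n with _ | _ | n
      · simp
      · simp at hn
      · simp
  have hi1 : IntegrableOn (fun ζ => ‖bKerD ω ζ 0‖ * (ω ‖ζ‖ / tl ν ‖ζ‖)) unitDisc := by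
    refine ⟨((hω.cont_bKerD h0).norm.aestronglyMeasurable meas_unitDisc).mul (quot_meas hω hν), ?_⟩
    rw [hasFiniteIntegral_iff_ofReal]
    · exact hfin
    · filter_upwards [ae_restrict_mem meas_unitDisc] with ζ hζ
      exact mul_nonneg (norm_nonneg _) (div_nonneg (hω.nonneg hζ) (hν.tl_pos hζ).le)
  have hhalf : (1/2:ℝ) ∈ Ico (0:ℝ) 1 := by norm_num
  obtain ⟨M, hM⟩ := (isCompact_Icc (a := (0:ℝ)) (b := 1/2)).exists_bound_of_continuousOn
    (f := fun s => (tl ν s)⁻¹)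
    ((hν.continuousOn_tl.mono (Icc_subset_Icc_right (by norm_num))).inv₀
      (fun s hs => (hν.2.2 s ⟨hs.1, hs.2.trans_lt (by norm_num)⟩).ne'))
  refine Integrable.mono' ((hω.integrableOn_norm.const_mul M).add
    (hi1.const_mul (2 * (2 * mom ω (2 * ((1:ℕ):ℝ) + 1))))) (quot_meas hω hν) ?_
  filter_upwards [ae_restrict_mem meas_unitDisc] with ζ hζ
  have h1 := hω.nonneg hζ
  have h2 := hν.tl_pos hζ
  have h3 : 0 ≤ ω ‖ζ‖ / tl ν ‖ζ‖ := by positivity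
  have hM0 : 0 ≤ M := (norm_nonneg _).trans (hM 0 (by norm_num))
  have e : 2 * (2 * mom ω (2 * ((1:ℕ):ℝ) + 1)) * (‖bKerD ω ζ 0‖ * (ω ‖ζ‖ / tl ν ‖ζ‖)) =
      2 * ‖ζ‖ * (ω ‖ζ‖ / tl ν ‖ζ‖) := by
    rw [hD]
    field_simp
  rw [Real.norm_of_nonneg h3, Pi.add_apply, e]
  rcases le_total ‖ζ‖ (1/2) with hle | hle
  · have h4 := hM ‖ζ‖ ⟨norm_nonneg _, hle⟩
    rw [Real.norm_of_nonneg (by positivity)] at h4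
    have h5 : ω ‖ζ‖ / tl ν ‖ζ‖ ≤ M * ω ‖ζ‖ := by
      rw [div_eq_mul_inv, mul_comm]
      gcongr
    have h6 : 0 ≤ 2 * ‖ζ‖ * (ω ‖ζ‖ / tl ν ‖ζ‖) := by positivity
    linarith
  · have h5 : 0 ≤ M * ω ‖ζ‖ := by positivity
    nlinarith

lemma fwd_integrable {ω ν : ℝ → ℝ} (hω : IsRadialWeight ω) (hν : IsRadialWeight ν)
    (h : ProjBddB ω (tl ν)) :
    IntegrableOn (fun ζ : ℂ => ω ‖ζ‖ / tl ν ‖ζ‖) unitDisc := by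
  obtain ⟨C, -, hC⟩ := h
  have h0 : (0:ℂ) ∈ unitDisc := by simp [unitDisc]
  have hm := hω.mom_pos 0
  have hcont : ContinuousOn (fun ζ : ℂ => (((tl ν ‖ζ‖)⁻¹ : ℝ) : ℂ)) unitDisc :=
    Complex.continuous_ofReal.comp_continuousOn
      (hν.continuousOn_tl_norm.inv₀ (fun ζ hζ => (hν.tl_pos hζ).ne'))
  have hw : wSup (tl ν) (fun ζ : ℂ => (((tl ν ‖ζ‖)⁻¹ : ℝ) : ℂ)) ≤ 1 := by
    refine essSup_le_of_ae_le _ ?_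
    filter_upwards [ae_restrict_mem meas_unitDisc] with ζ hζ
    have := hν.tl_pos hζ
    rw [Complex.norm_real, Real.norm_of_nonneg (by positivity), inv_mul_cancel₀ this.ne']
    simp
  have hI := (hC _ (hcont.aestronglyMeasurable meas_unitDisc)
    (hw.trans_lt ENNReal.one_lt_top)).1 0 h0
  have hK : ∀ ζ : ℂ, starRingEnd ℂ (bKer ω 0 ζ) =
      (((2 * mom ω (2 * ((0:ℕ) : ℝ) + 1))⁻¹ : ℝ) : ℂ) := by
    intro ζ
    rw [conj_bKer, zero_mul, kf, tsum_eq_single 0]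
    · simp [kc]
    · intro n hn
      simp [hn]
  refine (hI.norm.const_mul (2 * mom ω (2 * ((0:ℕ) : ℝ) + 1))).congr ?_
  filter_upwards [ae_restrict_mem meas_unitDisc] with ζ hζ
  have h1 := hω.nonneg hζ
  have h2 := hν.tl_pos hζ
  unfold bInt
  rw [hK, norm_mul, norm_mul, Complex.norm_real, Complex.norm_real, Complex.norm_real,
    Real.norm_of_nonneg (by positivity), Real.norm_of_nonneg (by positivity),
    Real.norm_of_nonneg h1]
  field_simp

/-- Proposition: `P_ω : L^∞_ν̂ → B^∞_ν̂` is bounded iff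
`sup_{z∈𝔻} (1-|z|) ν̂(z) ∫_𝔻 |(B^ω_ζ)'(z)| ω(ζ)/ν̂(ζ) dA(ζ) < ∞`. -/
theorem stmt17 (ω ν : ℝ → ℝ) (hω : IsRadialWeight ω) (hν : IsRadialWeight ν) :
    ProjBddB ω (tl ν) ↔
      ∃ C : ℝ, ∀ z ∈ unitDisc,
        ENNReal.ofReal ((1 - ‖z‖) * tl ν ‖z‖) *
          ∫⁻ ζ in unitDisc,
            ENNReal.ofReal (‖bKerD ω ζ z‖ * (ω ‖ζ‖ / tl ν ‖ζ‖)) ≤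
        ENNReal.ofReal C := by
  constructor
  · intro h
    have hg := fwd_integrable hω hν h
    obtain ⟨C, hC0, hC⟩ := h
    refine ⟨Real.pi * C, fun z hz => ?_⟩
    rw [lint_D hω hν hg hz]
    have h1z : 0 < (1 - ‖z‖) * tl ν ‖z‖ :=
      mul_pos (sub_pos.2 (mem_unitDisc.1 hz)) (hν.tl_pos hz)
    rw [← ENNReal.ofReal_mul h1z.le]
    refine ENNReal.ofReal_le_ofReal ?_
    set f : ℂ → ℂ := fun ζ => starRingEnd ℂ (bKerD ω ζ z) *
      ((‖bKerD ω ζ z‖⁻¹ * (tl ν ‖ζ‖)⁻¹ : ℝ) : ℂ) with hfdef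
    have hDm : AEStronglyMeasurable (fun ζ => bKerD ω ζ z) (volume.restrict unitDisc) :=
      (hω.cont_bKerD hz).aestronglyMeasurable meas_unitDisc
    have hfm : AEStronglyMeasurable f (volume.restrict unitDisc) := by
      refine (Complex.continuous_conj.comp_aestronglyMeasurable hDm).mul
        (Complex.continuous_ofReal.comp_aestronglyMeasurable
          (AEStronglyMeasurable.mul ?_ ?_))
      · exact hDm.norm.aemeasurable.inv.aestronglyMeasurable
      · exact (hν.continuousOn_tl_norm.inv₀
          (fun ζ hζ => (hν.tl_pos hζ).ne')).aestronglyMeasurable meas_unitDisc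
    have hw : wSup (tl ν) f ≤ 1 := by
      refine essSup_le_of_ae_le _ ?_
      filter_upwards [ae_restrict_mem meas_unitDisc] with ζ hζ
      have h2 := hν.tl_pos hζ
      rw [← ENNReal.ofReal_one]
      refine ENNReal.ofReal_le_ofReal ?_
      rw [hfdef, norm_mul, Complex.norm_conj, Complex.norm_real,
        Real.norm_of_nonneg (by positivity)]
      rcases eq_or_ne ‖bKerD ω ζ z‖ 0 with h0 | h0
      · simp [h0]
      · field_simp
        exact le_rfl
    have hwlt := hw.trans_lt ENNReal.one_lt_top
    obtain ⟨-, -, hb⟩ := hC f hfm hwlt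
    have hd := (hω.key (integrable_f hω hν hg hfm hwlt) hz).2.deriv
    have hI : ∫ ζ in unitDisc, bKerD ω ζ z * (f ζ * ((ω ‖ζ‖ : ℝ) : ℂ)) =
        ((∫ ζ in unitDisc, ‖bKerD ω ζ z‖ * (ω ‖ζ‖ / tl ν ‖ζ‖) : ℝ) : ℂ) := by
      rw [← integral_complex_ofReal]
      congr 1
      ext ζ
      have : bKerD ω ζ z * starRingEnd ℂ (bKerD ω ζ z) = ((‖bKerD ω ζ z‖ ^ 2 : ℝ) : ℂ) := by
        rw [Complex.mul_conj, Complex.normSq_eq_norm_sq]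
      calc _ = (bKerD ω ζ z * starRingEnd ℂ (bKerD ω ζ z)) *
            (((‖bKerD ω ζ z‖⁻¹ * (tl ν ‖ζ‖)⁻¹ * ω ‖ζ‖ : ℝ)) : ℂ) := by
            rw [hfdef]; push_cast; ring
        _ = _ := by
            rw [this, ← Complex.ofReal_mul]
            congr 1
            rcases eq_or_ne ‖bKerD ω ζ z‖ 0 with h0 | h0
            · simp [h0]
            · field_simp
    have hI0 : 0 ≤ ∫ ζ in unitDisc, ‖bKerD ω ζ z‖ * (ω ‖ζ‖ / tl ν ‖ζ‖) :=
      setIntegral_nonneg meas_unitDisc fun ζ hζ =>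
        mul_nonneg (norm_nonneg _) (div_nonneg (hω.nonneg hζ) (hν.tl_pos hζ).le)
    have hb' := (hb z hz).trans (mul_le_mul_right hw (ENNReal.ofReal C))
    rw [mul_one, ENNReal.ofReal_le_ofReal_iff hC0.le, hd, hI, norm_mul, norm_inv,
      Complex.norm_real, Complex.norm_real, Real.norm_of_nonneg Real.pi_pos.le,
      Real.norm_of_nonneg hI0] at hb'
    have hpi := Real.pi_pos
    have := mul_le_mul_of_nonneg_left hb' hpi.le
    refine le_trans (le_of_eq ?_) this
    field_simp
  · rintro ⟨C, hC⟩
    have hg := bwd_integrable hω hν (hC 0 (by simp [unitDisc]))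
    refine ⟨max C 1, lt_max_of_lt_right one_pos, fun f hfm hfin => ?_⟩
    have hfi := integrable_f hω hν hg hfm hfin
    refine ⟨fun z hz => (hω.key hfi hz).1, fun z hz =>
      (hω.key hfi hz).2.differentiableAt.differentiableWithinAt, fun z hz => ?_⟩
    have h1z : 0 < (1 - ‖z‖) * tl ν ‖z‖ :=
      mul_pos (sub_pos.2 (mem_unitDisc.1 hz)) (hν.tl_pos hz)
    have hCz := hC z hz
    rw [lint_D hω hν hg hz, ← ENNReal.ofReal_mul h1z.le] at hCz
    have hCz' := hCz.trans (ENNReal.ofReal_le_ofReal (le_max_left C 1))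
    rw [ENNReal.ofReal_le_ofReal_iff (by positivity)] at hCz'
    rw [(hω.key hfi hz).2.deriv, ← ENNReal.ofReal_toReal hfin.ne,
      ← ENNReal.ofReal_mul (by positivity)]
    refine ENNReal.ofReal_le_ofReal ?_
    set W := (wSup (tl ν) f).toReal
    have hW : 0 ≤ W := ENNReal.toReal_nonneg
    have hn : ‖∫ ζ in unitDisc, bKerD ω ζ z * (f ζ * ((ω ‖ζ‖ : ℝ) : ℂ))‖ ≤
        W * ∫ ζ in unitDisc, ‖bKerD ω ζ z‖ * (ω ‖ζ‖ / tl ν ‖ζ‖) := by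
      rw [← integral_const_mul]
      refine norm_integral_le_of_norm_le ((integrable_D hω hg hz).const_mul W) ?_
      filter_upwards [ae_bound hfin, ae_restrict_mem meas_unitDisc] with ζ hb hζ
      have h1 := hω.nonneg hζ
      have h2 := hν.tl_pos hζ
      rw [norm_mul, norm_mul, Complex.norm_real, Real.norm_of_nonneg h1]
      have h3 : ‖f ζ‖ ≤ W / tl ν ‖ζ‖ := (le_div_iff₀ h2).2 hb
      calc _ ≤ ‖bKerD ω ζ z‖ * (W / tl ν ‖ζ‖ * ω ‖ζ‖) := by gcongr
        _ = _ := by ring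
    have hpi : Real.pi⁻¹ ≤ 1 := inv_le_one_of_one_le₀ (by linarith [Real.pi_gt_three])
    rw [norm_mul, norm_inv, Complex.norm_real, Real.norm_of_nonneg Real.pi_pos.le]
    calc _ ≤ (1 - ‖z‖) * tl ν ‖z‖ * (1 *
          (W * ∫ ζ in unitDisc, ‖bKerD ω ζ z‖ * (ω ‖ζ‖ / tl ν ‖ζ‖))) := by gcongr
      _ = ((1 - ‖z‖) * tl ν ‖z‖ *
          ∫ ζ in unitDisc, ‖bKerD ω ζ z‖ * (ω ‖ζ‖ / tl ν ‖ζ‖)) * W := by ring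
      _ ≤ _ := by gcongr
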